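/- arXiv:1603.08715 — 2 statements merged into one kernel-verified Lean document; each statement's English description precedes it below -/
import Mathlib

section
/- For all d, n, k ≥ 1, the group OB(ℤ^d,n,k) of oblivious Turing machines is amenable. -/
open Function

/-- `ℤ^d`. -/
abbrev V (d : ℕ) : Type := Fin d → ℤ

/-- A head configuration is valid if it carries at most one head. -/
def headOk {d k : ℕ} (y : V d → Option (Fin k)) : Prop :=
  ∀ u v : V d, (y u).isSome → (y v).isSome → u = v

/-- The space `X_{n,k}`: a tape in `Σ^{ℤ^d}` together with at most one head
carrying a state in `Q = Fin k`. -/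
abbrev X (d n k : ℕ) : Type :=
  { c : (V d → Fin n) × (V d → Option (Fin k)) // headOk c.2 }

/-- `DefinedBy F F' f T` : `T` is the moving-head Turing machine defined by the
local rule `f`, reading the tape on the window `F`, writing on the window `F'`,
changing the state and moving the head. -/
def DefinedBy {d n k : ℕ} (F F' : Finset (V d))
    (f : (V d → Fin n) → Fin k → (V d → Fin n) × Fin k × V d)
    (T : X d n k → X d n k) : Prop :=
  -- `f` only depends on the restriction of the tape to `F`, and only the
  -- restriction of its tape output to `F'` matters:
  (∀ x x' q, (∀ v ∈ F, x v = x' v) →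
      (∀ v ∈ F', (f x q).1 v = (f x' q).1 v) ∧ (f x q).2 = (f x' q).2) ∧
  -- a configuration with no head is fixed:
  (∀ c : X d n k, (∀ v, c.val.2 v = none) → T c = c) ∧
  -- if the head is at `v` in state `q`, apply the local rule there:
  (∀ (c : X d n k) (v : V d) (q : Fin k), c.val.2 v = some q →
    (∀ t, (T c).val.1 t =
      if t - v ∈ F' then (f (fun u => c.val.1 (u + v)) q).1 (t - v) else c.val.1 t) ∧
    (∀ t, (T c).val.2 t =
      if t = v + (f (fun u => c.val.1 (u + v)) q).2.2
      then some (f (fun u => c.val.1 (u + v)) q).2.1 else none))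

/-- A moving-head `(d,n,k)`-Turing machine. -/
def IsTM {d n k : ℕ} (T : X d n k → X d n k) : Prop :=
  ∃ F F' f, DefinedBy F F' f T

/-- A reversible moving-head Turing machine: a Turing machine admitting a
Turing machine inverse. -/
def IsRTM {d n k : ℕ} (T : X d n k → X d n k) : Prop :=
  IsTM T ∧ ∃ S : X d n k → X d n k, IsTM S ∧ S ∘ T = id ∧ T ∘ S = id

/-- The set of reversible Turing machines, viewed as permutations of `X_{n,k}`. -/
def RTMset (d n k : ℕ) : Set (Equiv.Perm (X d n k)) :=
  {π | IsTM (⇑π) ∧ IsTM (⇑π.symm)}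

/-- The group `RTM(ℤ^d,n,k)` of reversible Turing machines (a subgroup of the
permutation group of `X_{n,k}`; the set of reversible Turing machines is closed
under composition and inversion, so it coincides with the subgroup it generates). -/
def RTMgrp (d n k : ℕ) : Subgroup (Equiv.Perm (X d n k)) :=
  Subgroup.closure (RTMset d n k)

/-- Local permutations: reversible Turing machines that never move the head. -/
def LPset (d n k : ℕ) : Set (Equiv.Perm (X d n k)) :=
  {π | π ∈ RTMset d n k ∧
    ∀ (c : X d n k) (v : V d), ((π c).val.2 v).isSome = (c.val.2 v).isSome}

/-- The group `LP(ℤ^d,n,k)` of local permutations. -/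
def LPgrp (d n k : ℕ) : Subgroup (Equiv.Perm (X d n k)) :=
  Subgroup.closure (LPset d n k)

/-- Reversible finite-state automata: reversible Turing machines that never
change the tape. -/
def RFAset (d n k : ℕ) : Set (Equiv.Perm (X d n k)) :=
  {π | π ∈ RTMset d n k ∧ ∀ c : X d n k, (π c).val.1 = c.val.1}

/-- The group `RFA(ℤ^d,n,k)` of reversible finite-state automata. -/
def RFAgrp (d n k : ℕ) : Subgroup (Equiv.Perm (X d n k)) :=
  Subgroup.closure (RFAset d n k)

/-- State-permutations: reversible machines that never move the head and never
change the tape, only permuting the state as a function of the tape. -/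
def SPset (d n k : ℕ) : Set (Equiv.Perm (X d n k)) :=
  {π | π ∈ RTMset d n k ∧ (∀ c : X d n k, (π c).val.1 = c.val.1) ∧
    ∀ (c : X d n k) (v : V d), ((π c).val.2 v).isSome = (c.val.2 v).isSome}

/-- The group `SP(ℤ^d,n,k)` of state-permutations. -/
def SPgrp (d n k : ℕ) : Subgroup (Equiv.Perm (X d n k)) :=
  Subgroup.closure (SPset d n k)

/-- The machines `T_u` that move the head by `u ∈ ℤ^d` without changing the
tape or the state. -/
def Shiftset (d n k : ℕ) : Set (Equiv.Perm (X d n k)) :=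
  {π | ∃ u : V d, ∀ c : X d n k,
    (π c).val.1 = c.val.1 ∧ ∀ t, (π c).val.2 t = c.val.2 (t - u)}

/-- The group `Shift(ℤ^d,n,k)`. -/
def Shiftgrp (d n k : ℕ) : Subgroup (Equiv.Perm (X d n k)) :=
  Subgroup.closure (Shiftset d n k)

/-- The group `OB(ℤ^d,n,k) = ⟨Shift(ℤ^d,n,k), LP(ℤ^d,n,k)⟩` of oblivious Turing
machines. -/
def OBgrp (d n k : ℕ) : Subgroup (Equiv.Perm (X d n k)) :=
  Subgroup.closure (Shiftset d n k ∪ LPset d n k)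

/-- The group `EL(ℤ^d,n,k) = ⟨RFA(ℤ^d,n,k), LP(ℤ^d,n,k)⟩` of elementary Turing
machines. -/
def ELgrp (d n k : ℕ) : Subgroup (Equiv.Perm (X d n k)) :=
  Subgroup.closure (RFAset d n k ∪ LPset d n k)

/-- A group is amenable if it carries a finitely additive, left-translation-invariant
probability measure defined on all subsets. -/
def IsAmenable (G : Type*) [Group G] : Prop :=
  ∃ m : Set G → ℝ,
    (∀ A : Set G, 0 ≤ m A) ∧
    m Set.univ = 1 ∧
    (∀ A B : Set G, Disjoint A B → m (A ∪ B) = m A + m B) ∧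
    (∀ (g : G) (A : Set G), m ((g * ·) '' A) = m A)

/-
Shifts commute with each other and normalize the local permutations, so `OB` is the extension of an
abelian group by the group of local permutations. The latter is locally finite: finitely many local
permutations look at the tape through a common finite window around the head, and there are only
finitely many permutations of the contents of this window together with the state.

Both properties give Følner sets. Abelian groups have polynomial growth. If `N` is locally finite
and `G ⧸ N` satisfies Følner's condition, lift a Følner set of `G ⧸ N` along a section; its
translates by finitely many elements differ from lifts by finitely many elements of `N`, and
multiplying the lift by the finite subgroup which these generate absorbs them.
-/

section Foelner

open scoped Pointwise symmDiff
open Filter Topology Finset MeasureTheory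

variable {G : Type*} [Group G]

open Classical in
/-- Følner's condition for a discrete group: there are finite sets which are almost invariant under
any prescribed finite set of left translations. -/
def FoelnerCondition (G : Type*) [Group G] : Prop :=
  ∀ (K : Finset G) (ε : ℝ), 0 < ε →
    ∃ F : Finset G, F.Nonempty ∧ ∀ g ∈ K, (#(g • F \ F) : ℝ) ≤ ε * #F

theorem card_symmDiff_smul_self [DecidableEq G] (g : G) (F : Finset G) :
    #((g • F) ∆ F) = 2 * #(g • F \ F) := by
  have h : #(F \ g • F) = #(g • F \ F) := card_sdiff_comm (card_smul_finset g F).symm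
  rw [symmDiff_def, sup_eq_union, card_union_of_disjoint disjoint_sdiff_sdiff, h, two_mul]

theorem FoelnerCondition.exists_isFoelner_count [MeasurableSpace G] [MeasurableSingletonClass G]
    (hG : FoelnerCondition G) :
    ∃ F : Finset G × ℕ → Finset G, IsFoelner G Measure.count atTop fun i ↦ (F i : Set G) := by
  classical
  have hF (i : Finset G × ℕ) := hG i.1 (1 / (i.2 + 1)) (by positivity)
  choose F hne hsmall using hF
  have hcard (i) : (0 : ℝ) < #(F i) := Nat.cast_pos.2 (hne i).card_pos
  refine ⟨F, ⟨.of_forall fun i ↦ (F i).measurableSet, .of_forall fun i ↦ ?_, .of_forall fun i ↦ ?_,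
    fun g ↦ ?_⟩⟩
  · simpa using (hne i).ne_empty
  · simp
  · have hratio (i) : Measure.count ((g • (F i : Set G)) ∆ F i) / Measure.count (F i : Set G) =
        ENNReal.ofReal (2 * (#(g • F i \ F i) / #(F i))) := by
      rw [← coe_smul_finset, ← coe_symmDiff, Measure.count_apply_finset, Measure.count_apply_finset,
        card_symmDiff_smul_self, ← mul_div_assoc, ENNReal.ofReal_div_of_pos (hcard i)]
      norm_cast
    simp only [hratio]
    have hbound : Tendsto (fun i : Finset G × ℕ ↦ 2 * (1 / ((i.2 : ℝ) + 1))) atTop (𝓝 0) := by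
      have hsnd : Tendsto (Prod.snd : Finset G × ℕ → ℕ) atTop atTop :=
        tendsto_snd.mono_left prod_atTop_atTop_eq.ge
      simpa using (tendsto_one_div_add_atTop_nhds_zero_nat (𝕜 := ℝ).comp hsnd).const_mul 2
    have hle : ∀ᶠ i : Finset G × ℕ in atTop,
        2 * ((#(g • F i \ F i) : ℝ) / #(F i)) ≤ 2 * (1 / ((i.2 : ℝ) + 1)) := by
      filter_upwards [eventually_ge_atTop (({g}, 0) : Finset G × ℕ)] with i hi
      have hgi : g ∈ i.1 := hi.1 (mem_singleton_self g)
      exact mul_le_mul_of_nonneg_left ((div_le_iff₀ (hcard i)).2 (hsmall i g hgi)) zero_le_two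
    simpa using ENNReal.tendsto_ofReal
      (squeeze_zero' (.of_forall fun i ↦ by positivity) hle hbound)

theorem FoelnerCondition.isAmenable (hG : FoelnerCondition G) : IsAmenable G := by
  classical
  let _ : MeasurableSpace G := ⊤
  obtain ⟨F, hF⟩ := hG.exists_isFoelner_count
  obtain ⟨m, huniv, hadd, hsmul⟩ := hF.amenable
  replace hadd (A B : Set G) (hAB : Disjoint A B) : m (A ∪ B) = m A + m B := hadd A B trivial hAB
  have hfin (A : Set G) : m A ≠ ⊤ := by
    have hcompl : m A + m Aᶜ = 1 := by
      rw [← hadd A Aᶜ disjoint_compl_right, Set.union_compl_self, huniv]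
    exact ne_top_of_le_ne_top ENNReal.one_ne_top (hcompl ▸ le_self_add)
  refine ⟨fun A ↦ (m A).toReal, fun _ ↦ ENNReal.toReal_nonneg, by simp [huniv], fun A B hAB ↦ ?_,
    fun g A ↦ congrArg ENNReal.toReal (hsmul g A)⟩
  simp only [hadd A B hAB, ENNReal.toReal_add (hfin A) (hfin B)]

/-! ### Commutative groups -/

open Classical in
-- If no power of `S := insert 1 K` is almost invariant, then `#(S ^ (m + 1)) > (1 + ε) * #(S ^ m)`
-- for all `m`, so the powers of `S` grow exponentially.
theorem FoelnerCondition.of_subexponential_growth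
    (hG : ∀ (S : Finset G) (c : ℝ), 1 < c → ∃ m : ℕ, (#(S ^ m) : ℝ) < c ^ m) :
    FoelnerCondition G := by
  intro K ε hε
  let S := insert 1 K
  by_contra! hexpand
  have hgrow (m : ℕ) : (1 + ε) ^ m ≤ #(S ^ m) := by
    induction m with
    | zero => simp
    | succ m ih =>
      obtain ⟨g, hgK, hg⟩ := hexpand (S ^ m) (insert_nonempty 1 K).pow
      have hsub : S ^ m ∪ (g • S ^ m \ S ^ m) ⊆ S ^ (m + 1) := by
        rw [union_sdiff_self_eq_union, pow_succ']
        refine union_subset (subset_mul_right _ (mem_insert_self 1 K)) ?_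
        exact smul_finset_subset_mul (mem_insert_of_mem hgK)
      have hcard : (#(S ^ m) + #(g • S ^ m \ S ^ m) : ℝ) ≤ #(S ^ (m + 1)) := by
        rw [← Nat.cast_add, ← card_union_of_disjoint disjoint_sdiff]
        exact_mod_cast card_le_card hsub
      calc (1 + ε) ^ (m + 1) = (1 + ε) ^ m * (1 + ε) := pow_succ _ _
        _ ≤ #(S ^ m) * (1 + ε) := by gcongr
        _ ≤ #(S ^ (m + 1)) := by linarith
  obtain ⟨m, hm⟩ := hG S (1 + ε) (by linarith)
  exact (hgrow m).not_gt hm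

theorem card_pow_le_of_commMonoid {M : Type*} [CommMonoid M] [DecidableEq M] (S : Finset M)
    (m : ℕ) : #(S ^ m) ≤ (m + 1) ^ #S := by
  let monomial (a : S → Fin (m + 1)) : M := ∏ s : S, (s : M) ^ (a s : ℕ)
  have hsub : S ^ m ⊆ univ.image monomial := by
    intro x hx
    obtain ⟨f, rfl⟩ := mem_pow.1 hx
    let l := List.ofFn fun i ↦ (f i : M)
    have hcount (s : S) : l.count (s : M) < m + 1 :=
      Nat.lt_succ_of_le (List.count_le_length.trans_eq List.length_ofFn)
    refine mem_image.2 ⟨fun s ↦ ⟨l.count (s : M), hcount s⟩, mem_univ _, ?_⟩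
    have hl : l.toFinset ⊆ S := fun x hx ↦ by
      obtain ⟨i, rfl⟩ := List.mem_ofFn.1 (List.mem_toFinset.1 hx)
      exact (f i).2
    rw [prod_list_count_of_subset l S hl, ← prod_coe_sort]
  simpa using (card_le_card hsub).trans card_image_le

theorem FoelnerCondition.of_commGroup (A : Type*) [CommGroup A] : FoelnerCondition A := by
  classical
  refine .of_subexponential_growth fun S c hc ↦ ?_
  have hlim := (tendsto_add_atTop_iff_nat 1).2 (tendsto_pow_const_div_const_pow_of_one_lt #S hc)
  obtain ⟨m, hm⟩ := (hlim.eventually_lt_const (inv_pos.2 (zero_lt_one.trans hc))).exists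
  refine ⟨m, ?_⟩
  have hc0 : 0 < c := zero_lt_one.trans hc
  calc (#(S ^ m) : ℝ) ≤ ((m + 1 : ℕ) : ℝ) ^ #S := mod_cast card_pow_le_of_commMonoid S m
    _ < c⁻¹ * c ^ (m + 1) := (div_lt_iff₀ (pow_pos hc0 _)).1 hm
    _ = c ^ m := by rw [pow_succ']; field_simp

/-! ### Extensions by locally finite groups -/

/-- A locally finite group: every finitely generated subgroup is finite. -/
def IsLocallyFiniteGroup (G : Type*) [Group G] : Prop :=
  ∀ S : Set G, S.Finite → Finite (Subgroup.closure S)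

theorem IsLocallyFiniteGroup.of_injective {H : Type*} [Group H] (hG : IsLocallyFiniteGroup G)
    (f : H →* G) (hf : Injective f) : IsLocallyFiniteGroup H := by
  intro S hS
  have := hG (f '' S) (hS.image f)
  rw [← MonoidHom.map_closure] at this
  exact .of_equiv _ ((Subgroup.closure S).equivMapOfInjective f hf).symm.toEquiv

theorem IsLocallyFiniteGroup.of_le_iSup_of_directed {ι : Type*} [Nonempty ι] {N : Subgroup G}
    {H : ι → Subgroup G} (hH : Directed (· ≤ ·) H) (hfin : ∀ i, Finite (H i)) (hN : N ≤ ⨆ i, H i) :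
    IsLocallyFiniteGroup N := by
  intro S hS
  have hcover : ((hS.image N.subtype).toFinset : Set G) ⊆ ⋃ i, (H i : Set G) := by
    rw [Set.Finite.coe_toFinset, ← Subgroup.coe_iSup_of_directed hH]
    rintro _ ⟨x, -, rfl⟩
    exact hN x.2
  obtain ⟨i, hi⟩ := Directed.exists_mem_subset_of_finset_subset_biUnion hH hcover
  rw [Set.Finite.coe_toFinset] at hi
  have hle : (Subgroup.closure S).map N.subtype ≤ H i := by
    rwa [MonoidHom.map_closure, Subgroup.closure_le]
  have := hfin i
  have := Finite.Set.subset (H i : Set G) hle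
  exact .of_equiv _ ((Subgroup.closure S).equivMapOfInjective _ N.subtype_injective).symm.toEquiv

section Extension

variable {N : Subgroup G}

open Classical in
/-- The finite set of all products of a representative of an element of `F` and an element
of `H`. -/
noncomputable def outMul (F : Finset (G ⧸ N)) (H : Finset N) : Finset G :=
  (F ×ˢ H).image fun p ↦ p.1.out * p.2

theorem card_outMul (F : Finset (G ⧸ N)) (H : Finset N) : #(outMul F H) = #F * #H := by
  classical
  rw [outMul, card_image_of_injective, card_product]
  rintro ⟨q, h⟩ ⟨q', h'⟩ heq
  obtain rfl : q = q' := by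
    simpa using congrArg (QuotientGroup.mk (s := N)) heq
  simpa using heq

variable [N.Normal]

/-- The cocycle of the section `Quotient.out : G ⧸ N → G`: the element of `N` by which `g` times
the representative of `q` differs from the representative of `g q`. -/
noncomputable def outCocycle (g : G) (q : G ⧸ N) : N :=
  ⟨((g : G ⧸ N) * q).out⁻¹ * (g * q.out), QuotientGroup.eq.1 (by simp)⟩

theorem mul_out_eq_out_mul_outCocycle (g : G) (q : G ⧸ N) :
    g * q.out = ((g : G ⧸ N) * q).out * outCocycle g q :=
  (mul_inv_cancel_left _ _).symm

open Classical in
theorem smul_outMul_sdiff_subset {g : G} {F : Finset (G ⧸ N)} {H : Finset N}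
    (hH : ∀ q ∈ F, ∀ h ∈ H, outCocycle g q * h ∈ H) :
    g • outMul F H \ outMul F H ⊆ outMul ((g : G ⧸ N) • F \ F) H := by
  intro x hx
  obtain ⟨hxg, hxF⟩ := mem_sdiff.1 hx
  obtain ⟨y, hy, rfl⟩ := mem_smul_finset.1 hxg
  obtain ⟨⟨q, h⟩, hqh, rfl⟩ := mem_image.1 hy
  obtain ⟨hq, hh⟩ := mem_product.1 hqh
  have hmove : g • (q.out * (h : G)) =
      ((g : G ⧸ N) * q).out * ((outCocycle g q * h : N) : G) := by
    rw [smul_eq_mul, ← mul_assoc, mul_out_eq_out_mul_outCocycle, mul_assoc, Subgroup.coe_mul]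
  have hmem {F' : Finset (G ⧸ N)} (hF' : (g : G ⧸ N) * q ∈ F') :
      g • (q.out * (h : G)) ∈ outMul F' H :=
    mem_image.2 ⟨(_, _), mem_product.2 ⟨hF', hH q hq h hh⟩, hmove.symm⟩
  exact hmem (mem_sdiff.2 ⟨smul_mem_smul_finset hq, fun hgq ↦ hxF (hmem hgq)⟩)

theorem FoelnerCondition.of_quotient (hN : IsLocallyFiniteGroup N)
    (hQ : FoelnerCondition (G ⧸ N)) : FoelnerCondition G := by
  classical
  intro K ε hε
  obtain ⟨F, hFne, hF⟩ := hQ (K.image (↑)) ε hε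
  let C : Set N := (K ×ˢ F).image fun p ↦ outCocycle p.1 p.2
  have hfin : (Subgroup.closure C : Set N).Finite := hN C (Finset.finite_toSet _)
  let H : Finset N := hfin.toFinset
  have hHpos : H.Nonempty := ⟨1, hfin.mem_toFinset.2 (one_mem _)⟩
  refine ⟨outMul F H, (hFne.product hHpos).image _, fun g hg ↦ ?_⟩
  have hmem : ∀ q ∈ F, ∀ h ∈ H, outCocycle g q * h ∈ H := fun q hq h hh ↦
    hfin.mem_toFinset.2 (mul_mem (Subgroup.subset_closure
      (mem_image_of_mem _ (mem_product.2 ⟨hg, hq⟩ : (g, q) ∈ _))) (hfin.mem_toFinset.1 hh))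
  have hFg : (#((g : G ⧸ N) • F \ F) : ℝ) ≤ ε * #F := by
    convert hF g (mem_image_of_mem _ hg)
  calc (#(g • outMul F H \ outMul F H) : ℝ)
      ≤ #(outMul ((g : G ⧸ N) • F \ F) H) :=
        mod_cast card_le_card (smul_outMul_sdiff_subset hmem)
    _ = #((g : G ⧸ N) • F \ F) * #H := by rw [card_outMul, Nat.cast_mul]
    _ ≤ ε * #F * #H := by gcongr
    _ = ε * #(outMul F H) := by rw [card_outMul, Nat.cast_mul, mul_assoc]

end Extension

theorem isAmenable_sup_of_le_normalizer {A N : Subgroup G} [IsMulCommutative A]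
    (hAN : A ≤ Subgroup.normalizer N) (hN : IsLocallyFiniteGroup N) :
    IsAmenable (A ⊔ N : Subgroup G) := by
  have := Subgroup.normal_subgroupOf_of_le_normalizer hAN
  have := Subgroup.normal_subgroupOf_sup_of_le_normalizer hAN
  let e := QuotientGroup.quotientInfEquivProdNormalizerQuotient A N hAN
  have hcomm : ∀ x y : (A ⊔ N : Subgroup G) ⧸ N.subgroupOf (A ⊔ N), x * y = y * x := by
    refine (e.surjective.comp QuotientGroup.mk_surjective).forall₂.2 fun a b ↦ ?_
    simp only [comp_apply, ← map_mul, ← QuotientGroup.mk_mul, mul_comm' a b]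
  let _ : CommGroup ((A ⊔ N : Subgroup G) ⧸ N.subgroupOf (A ⊔ N)) := { mul_comm := hcomm }
  let ι : N.subgroupOf (A ⊔ N) ≃* N := Subgroup.subgroupOfEquivOfLe le_sup_right
  have hN' : IsLocallyFiniteGroup (N.subgroupOf (A ⊔ N)) :=
    hN.of_injective (ι : _ →* N) ι.injective
  exact (FoelnerCondition.of_quotient hN' (.of_commGroup _)).isAmenable

end Foelner

section Machines

open Finset

variable {d n k : ℕ}

/-- `s` is the machine `T_u`, moving the head by `u`; `Shiftset d n k` consists of the permutations
which satisfy this for some `u`. -/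
def IsShiftBy (u : V d) (s : Equiv.Perm (X d n k)) : Prop :=
  ∀ c : X d n k, (s c).val.1 = c.val.1 ∧ ∀ t, (s c).val.2 t = c.val.2 (t - u)

theorem IsShiftBy.inv {u : V d} {s : Equiv.Perm (X d n k)} (hs : IsShiftBy u s) :
    IsShiftBy (-u) s⁻¹ := by
  intro c
  obtain ⟨c, rfl⟩ := s.surjective c
  rw [Equiv.Perm.inv_def, s.symm_apply_apply]
  exact ⟨(hs c).1.symm, fun t ↦ by rw [(hs c).2, sub_neg_eq_add, add_sub_cancel_right]⟩

theorem inv_mem_Shiftset {s : Equiv.Perm (X d n k)} (hs : s ∈ Shiftset d n k) :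
    s⁻¹ ∈ Shiftset d n k :=
  hs.imp' (-·) fun _ hu ↦ IsShiftBy.inv hu

theorem commute_of_mem_Shiftset {s t : Equiv.Perm (X d n k)} (hs : s ∈ Shiftset d n k)
    (ht : t ∈ Shiftset d n k) : s * t = t * s := by
  obtain ⟨u, hu⟩ := hs
  obtain ⟨v, hv⟩ := ht
  refine Equiv.ext fun c ↦ Subtype.ext (Prod.ext ?_ (funext fun w ↦ ?_))
  · simp only [Equiv.Perm.mul_apply, hu, hv]
  · simp only [Equiv.Perm.mul_apply, hu, hv, sub_right_comm]

instance isMulCommutative_Shiftgrp : IsMulCommutative (Shiftgrp d n k) :=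
  Subgroup.isMulCommutative_closure fun _ hs _ ht ↦ commute_of_mem_Shiftset hs ht

/-! ### Local permutations are normalized by shifts -/

theorem inv_mem_LPset {π : Equiv.Perm (X d n k)} (hπ : π ∈ LPset d n k) : π⁻¹ ∈ LPset d n k := by
  refine ⟨⟨hπ.1.2, hπ.1.1⟩, fun c v ↦ ?_⟩
  simpa using (hπ.2 (π⁻¹ c) v).symm

-- Conjugating by `T_u` makes the machine act as if its head were at `v - u` when it is at `v`, so
-- that, relative to the head, the windows and the local rule are translated by `-u`.
theorem IsTM.conj_shift {π s : Equiv.Perm (X d n k)} (hπ : IsTM ⇑π) (hs : s ∈ Shiftset d n k) :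
    IsTM ⇑(s * π * s⁻¹) := by
  obtain ⟨F, F', f, hlocal, hheadless, hrule⟩ := hπ
  obtain ⟨u, hu⟩ := hs
  have htape (c : X d n k) : (s⁻¹ c).val.1 = c.val.1 := (IsShiftBy.inv hu c).1
  have hhead (c : X d n k) (v : V d) : (s⁻¹ c).val.2 v = c.val.2 (v + u) := by
    rw [(IsShiftBy.inv hu c).2, sub_neg_eq_add]
  let g (x : V d → Fin n) (q : Fin k) : (V d → Fin n) × Fin k × V d :=
    let r := f (fun w ↦ x (w - u)) q
    (fun w ↦ r.1 (w + u), r.2)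
  refine ⟨F.image (· - u), F'.image (· - u), g, fun x x' q hxx' ↦ ?_, fun c hc ↦ ?_,
    fun c v q hcv ↦ ?_⟩
  · have hg := hlocal (fun w ↦ x (w - u)) (fun w ↦ x' (w - u)) q
      fun w hw ↦ hxx' _ (mem_image_of_mem _ hw)
    exact ⟨by simpa [g] using hg.1, hg.2⟩
  · rw [Equiv.Perm.mul_apply, Equiv.Perm.mul_apply, hheadless _ fun v ↦ by rw [hhead, hc],
      Equiv.Perm.inv_def, s.apply_symm_apply]
  · obtain ⟨hnewTape, hnewHead⟩ := hrule (s⁻¹ c) (v - u) q (by rw [hhead, sub_add_cancel, hcv])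
    have hview : (fun w ↦ (s⁻¹ c).val.1 (w + (v - u))) = fun w ↦ c.val.1 (w - u + v) :=
      funext fun w ↦ by rw [htape, sub_add_eq_add_sub, add_sub_assoc]
    rw [hview] at hnewTape hnewHead
    have hwindow (t : V d) : t - v ∈ F'.image (· - u) ↔ t - (v - u) ∈ F' := by
      simp [sub_eq_iff_eq_add, sub_add]
    refine ⟨fun t ↦ ?_, fun t ↦ ?_⟩
    · simp only [Equiv.Perm.mul_apply, (hu _).1, hnewTape, htape, hwindow, g, sub_add]
    · simp only [Equiv.Perm.mul_apply, (hu _).2, hnewHead, g, sub_eq_iff_eq_add, add_right_comm,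
        sub_add_cancel]

theorem conj_mem_LPset {π s : Equiv.Perm (X d n k)} (hπ : π ∈ LPset d n k)
    (hs : s ∈ Shiftset d n k) : s * π * s⁻¹ ∈ LPset d n k := by
  refine ⟨⟨hπ.1.1.conj_shift hs, ?_⟩, fun c v ↦ ?_⟩
  · have : IsTM ⇑(π⁻¹) := hπ.1.2
    simpa [mul_assoc] using! this.conj_shift hs
  · obtain ⟨u, hu⟩ := hs
    rw [Equiv.Perm.mul_apply, Equiv.Perm.mul_apply, (hu _).2, hπ.2, (IsShiftBy.inv hu c).2,
      sub_neg_eq_add, sub_add_cancel]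

theorem Shiftgrp_le_normalizer_LPgrp : Shiftgrp d n k ≤ Subgroup.normalizer (LPgrp d n k) := by
  refine (Subgroup.closure_le _).2 fun s hs ↦ Subgroup.normalizer_le_normalizer_closure _ ?_
  refine Subgroup.mem_set_normalizer_iff.2 fun π ↦ ⟨fun hπ ↦ conj_mem_LPset hπ hs, fun hπ ↦ ?_⟩
  simpa [mul_assoc] using conj_mem_LPset hπ (inv_mem_Shiftset hs)

/-! ### Local permutations form a locally finite group -/

/-- The view of a configuration from the cell `v`: the tape on the window `v + F` and the state of
the head at `v`, if there is one. -/
def localView (F : Finset (V d)) (c : X d n k) (v : V d) : (F → Fin n) × Option (Fin k) :=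
  (fun w ↦ c.val.1 (w + v), c.val.2 v)

/-- `π` keeps the head in place and acts only on the view through the window `F` from the head,
in a way that depends only on that view. -/
structure IsLocalOn (F : Finset (V d)) (π : Equiv.Perm (X d n k)) : Prop where
  headless : ∀ c : X d n k, (∀ v, c.val.2 v = none) → π c = c
  isSome_head : ∀ (c : X d n k) (v : V d), ((π c).val.2 v).isSome = (c.val.2 v).isSome
  tape_eq : ∀ (c : X d n k) (v : V d), (c.val.2 v).isSome → ∀ t, t - v ∉ F →
    (π c).val.1 t = c.val.1 t
  localView_eq : ∀ (c c' : X d n k) (v v' : V d), (c.val.2 v).isSome →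
    localView F c v = localView F c' v' → localView F (π c) v = localView F (π c') v'

variable {F F' : Finset (V d)} {π ρ : Equiv.Perm (X d n k)}

theorem localView_eq_iff {c c' : X d n k} {v v' : V d} :
    localView F c v = localView F c' v' ↔
      (∀ w ∈ F, c.val.1 (w + v) = c'.val.1 (w + v')) ∧ c.val.2 v = c'.val.2 v' := by
  simp [localView, funext_iff]

namespace IsLocalOn

theorem one (F : Finset (V d)) : IsLocalOn F (1 : Equiv.Perm (X d n k)) :=
  ⟨fun _ _ ↦ rfl, fun _ _ ↦ rfl, fun _ _ _ _ _ ↦ rfl, fun _ _ _ _ _ h ↦ h⟩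

theorem mul (hπ : IsLocalOn F π) (hρ : IsLocalOn F ρ) : IsLocalOn F (π * ρ) where
  headless c hc := by rw [Equiv.Perm.mul_apply, hρ.headless c hc, hπ.headless c hc]
  isSome_head c v := (hπ.isSome_head _ v).trans (hρ.isSome_head c v)
  tape_eq c v hv t ht :=
    (hπ.tape_eq _ v ((hρ.isSome_head c v).trans hv) t ht).trans (hρ.tape_eq c v hv t ht)
  localView_eq c c' v v' hv h :=
    hπ.localView_eq _ _ v v' ((hρ.isSome_head c v).trans hv) (hρ.localView_eq c c' v v' hv h)

theorem mono (hFF' : F ⊆ F') (hπ : IsLocalOn F π) : IsLocalOn F' π where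
  headless := hπ.headless
  isSome_head := hπ.isSome_head
  tape_eq c v hv t ht := hπ.tape_eq c v hv t fun htF ↦ ht (hFF' htF)
  localView_eq c c' v v' hv h := by
    obtain ⟨htape, hstate⟩ := localView_eq_iff.1 h
    obtain ⟨htape', hstate'⟩ := localView_eq_iff.1 <| hπ.localView_eq c c' v v' hv <|
      localView_eq_iff.2 ⟨fun w hw ↦ htape w (hFF' hw), hstate⟩
    refine localView_eq_iff.2 ⟨fun w hw ↦ ?_, hstate'⟩
    by_cases hwF : w ∈ F
    · exact htape' w hwF
    · rw [hπ.tape_eq c v hv _ (by simpa using hwF),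
        hπ.tape_eq c' v' (hstate ▸ hv) _ (by simpa using hwF), htape w hw]

theorem eq_of_localView_eq (hπ : IsLocalOn F π) (hρ : IsLocalOn F ρ)
    (h : ∀ c v, (c.val.2 v).isSome → localView F (π c) v = localView F (ρ c) v) : π = ρ := by
  refine Equiv.ext fun c ↦ ?_
  by_cases hc : ∀ v, c.val.2 v = none
  · rw [hπ.headless c hc, hρ.headless c hc]
  obtain ⟨v, hv⟩ := not_forall.1 hc
  replace hv := Option.isSome_iff_ne_none.2 hv
  refine Subtype.ext (Prod.ext (funext fun t ↦ ?_) (funext fun t ↦ ?_))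
  · by_cases ht : t - v ∈ F
    · simpa using (localView_eq_iff.1 (h c v hv)).1 _ ht
    · rw [hπ.tape_eq c v hv t ht, hρ.tape_eq c v hv t ht]
  · by_cases ht : (c.val.2 t).isSome
    · exact (localView_eq_iff.1 (h c t ht)).2
    · have hπt := hπ.isSome_head c t
      have hρt := hρ.isSome_head c t
      simp_all

end IsLocalOn

/-- The group of local permutations with window `F`. -/
def localOn (d n k : ℕ) (F : Finset (V d)) : Subgroup (Equiv.Perm (X d n k)) where
  carrier := {π | IsLocalOn F π ∧ IsLocalOn F π⁻¹}
  one_mem' := ⟨.one F, by simpa using .one F⟩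
  mul_mem' ha hb := ⟨ha.1.mul hb.1, by simpa using hb.2.mul ha.2⟩
  inv_mem' ha := ⟨ha.2, by simpa using ha.1⟩

theorem localOn_mono : Monotone (localOn d n k) :=
  fun _ _ hFF' _ hπ ↦ ⟨hπ.1.mono hFF', hπ.2.mono hFF'⟩

-- A local permutation is determined by the relation between old and new views at the head.
theorem finite_localOn (F : Finset (V d)) : Finite (localOn d n k F) := by
  let View := (F → Fin n) × Option (Fin k)
  let rel (π : localOn d n k F) : Set (View × View) :=
    {p | ∃ c v, (c.val.2 v).isSome ∧ (localView F c v, localView F (π.1 c) v) = p}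
  refine Finite.of_injective rel fun π ρ h ↦ Subtype.ext ?_
  refine π.2.1.eq_of_localView_eq ρ.2.1 fun c v hv ↦ ?_
  have hmem : (localView F c v, localView F (π.1 c) v) ∈ rel ρ := h ▸ ⟨c, v, hv, rfl⟩
  obtain ⟨c', v', hv', hp⟩ := hmem
  obtain ⟨hold, hnew⟩ := Prod.ext_iff.1 hp
  exact hnew.symm.trans (ρ.2.1.localView_eq c' c v' v hv' hold)

theorem exists_isLocalOn_of_mem_LPset (hπ : π ∈ LPset d n k) : ∃ F, IsLocalOn F π := by
  obtain ⟨⟨⟨F, F', f, hlocal, hheadless, hrule⟩, -⟩, hstay⟩ := hπ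
  have hstate (c : X d n k) v q (hq : c.val.2 v = some q) :
      (π c).val.2 v = some (f (fun w ↦ c.val.1 (w + v)) q).2.1 := by
    have hsome : ((π c).val.2 v).isSome := by rw [hstay, hq, Option.isSome_some]
    rw [(hrule c v q hq).2] at hsome ⊢
    split_ifs at hsome ⊢ with hmove
    · rfl
    · simp at hsome
  refine ⟨F ∪ F', hheadless, hstay, fun c v hv t ht ↦ ?_, fun c c' v v' hv hview ↦ ?_⟩
  · obtain ⟨q, hq⟩ := Option.isSome_iff_exists.1 hv
    rw [(hrule c v q hq).1, if_neg fun htF' ↦ ht (mem_union_right F htF')]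
  · obtain ⟨q, hq⟩ := Option.isSome_iff_exists.1 hv
    obtain ⟨htape, hhead⟩ := localView_eq_iff.1 hview
    have hq' : c'.val.2 v' = some q := hhead ▸ hq
    obtain ⟨hwrite, hmove⟩ := hlocal (fun w ↦ c.val.1 (w + v)) (fun w ↦ c'.val.1 (w + v')) q
      fun w hw ↦ htape w (mem_union_left F' hw)
    refine localView_eq_iff.2 ⟨fun w hw ↦ ?_, by rw [hstate c v q hq, hstate c' v' q hq', hmove]⟩
    rw [(hrule c v q hq).1, (hrule c' v' q hq').1, add_sub_cancel_right, add_sub_cancel_right]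
    split_ifs with hwF'
    · exact hwrite w hwF'
    · exact htape w hw

theorem LPgrp_le_iSup_localOn : LPgrp d n k ≤ ⨆ F, localOn d n k F := by
  refine (Subgroup.closure_le _).2 fun π hπ ↦ ?_
  obtain ⟨F, hF⟩ := exists_isLocalOn_of_mem_LPset hπ
  obtain ⟨F', hF'⟩ := exists_isLocalOn_of_mem_LPset (inv_mem_LPset hπ)
  exact Subgroup.mem_iSup_of_mem (F ∪ F') ⟨hF.mono subset_union_left, hF'.mono subset_union_right⟩

theorem isLocallyFiniteGroup_LPgrp : IsLocallyFiniteGroup (LPgrp d n k) :=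
  .of_le_iSup_of_directed localOn_mono.directed_le finite_localOn LPgrp_le_iSup_localOn

end Machines

/-- The group `OB(ℤ^d,n,k)` of oblivious Turing machines is amenable. -/
theorem ob_amenable (d n k : ℕ) (hd : 1 ≤ d) (hn : 1 ≤ n) (hk : 1 ≤ k) :
    IsAmenable (OBgrp d n k) := by
  have hsup : OBgrp d n k = Shiftgrp d n k ⊔ LPgrp d n k := Subgroup.closure_union _ _
  rw [hsup]
  exact isAmenable_sup_of_le_normalizer Shiftgrp_le_normalizer_LPgrp isLocallyFiniteGroup_LPgrp
end

section
/- Let d, k ≥ 1 and n ≥ 2. The free group on two generators embeds into RFA(ℤ^d,n,k), and hence into RTM(ℤ^d,n,k); in particular, neither RFA(ℤ^d,n,k) nor RTM(ℤ^d,n,k) is amenable. -/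
open Function

/-!
Fix a symbol `s`, a step `w` and finitely many offsets `a c` such that the cells `j • w + a c`
are all distinct. The involution of colour `c` moves the head across the edge `{v, v + w}` when
`v + a c` carries `s` and `v + a c - w` does not; it is a finite-state automaton. Given a word in
the colours without repeated consecutive letters, write `s` in the cell `j • w + a c` for its
`j`-th letter `c`: then the edges from `j • w` to `(j + 1) • w` are open for exactly the right
colours, and the product of the involutions carries the head from the end of the path back to `0`.
So the involutions satisfy no relations besides being involutions, and the products of disjoint
pairs of them generate a free group. Non-amenability follows since amenability passes to subgroups
and a free group of rank at least two is paradoxical.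
-/

/-! ### Amenability -/

section Amenability

variable {G H : Type*} [Group G] [Group H]

/-- A left-invariant mean on `G`: a finitely additive, left-translation-invariant probability
measure on all subsets of `G`. The group is amenable when such a mean exists. -/
structure IsInvariantMean (m : Set G → ℝ) : Prop where
  nonneg (A : Set G) : 0 ≤ m A
  univ : m Set.univ = 1
  union (A B : Set G) : Disjoint A B → m (A ∪ B) = m A + m B
  image_mul_left (g : G) (A : Set G) : m ((g * ·) '' A) = m A

theorem isAmenable_iff_exists_isInvariantMean :
    IsAmenable G ↔ ∃ m : Set G → ℝ, IsInvariantMean m :=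
  ⟨fun ⟨m, h₀, h₁, h₂, h₃⟩ => ⟨m, h₀, h₁, h₂, h₃⟩, fun ⟨m, h₀, h₁, h₂, h₃⟩ => ⟨m, h₀, h₁, h₂, h₃⟩⟩

namespace IsInvariantMean

theorem mono {m : Set G → ℝ} (hm : IsInvariantMean m) {A B : Set G} (h : A ⊆ B) : m A ≤ m B := by
  have hB := hm.union A (B \ A) Set.disjoint_sdiff_right
  rw [Set.union_sdiff_cancel h] at hB
  linarith [hm.nonneg (B \ A)]

theorem comp_preimage {m : Set G → ℝ} (hm : IsInvariantMean m) (φ : H →* G) {r : G → H}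
    (hr : ∀ h g, r (φ h * g) = h * r g) : IsInvariantMean fun A : Set H => m (r ⁻¹' A) where
  nonneg _ := hm.nonneg _
  univ := hm.univ
  union _ _ hAB := hm.union _ _ (hAB.preimage r)
  image_mul_left h A := by
    have hpre : r ⁻¹' ((h * ·) '' A) = (φ h * ·) '' (r ⁻¹' A) := by
      ext g
      simp only [Set.image_mul_left, Set.mem_preimage, ← map_inv, hr]
    rw [hpre, hm.image_mul_left]

/-- The words starting with `(i, true)`, together with the `i`-translate of the words starting
with `(i, false)`, cover the free group. -/
theorem one_le_startsWith_add {α : Type*} [DecidableEq α] {m : Set (FreeGroup α) → ℝ}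
    (hm : IsInvariantMean m) (i : α) :
    1 ≤ m (FreeGroup.startsWith (i, true)) + m (FreeGroup.startsWith (i, false)) := by
  have hcover : (FreeGroup.startsWith (i, true))ᶜ ⊆
      (FreeGroup.of i * ·) '' FreeGroup.startsWith (i, false) := fun g hg =>
    ⟨FreeGroup.mk [(i, false)] * g, FreeGroup.startsWith_mk_mul (w := (i, false)) g hg,
      mul_inv_cancel_left (FreeGroup.of i) g⟩
  calc (1 : ℝ) = m (FreeGroup.startsWith (i, true)) + m (FreeGroup.startsWith (i, true))ᶜ := by
        rw [← hm.union _ _ disjoint_compl_right, Set.union_compl_self, hm.univ]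
    _ ≤ m (FreeGroup.startsWith (i, true)) + m (FreeGroup.startsWith (i, false)) := by
        grw [hm.mono hcover, hm.image_mul_left]

end IsInvariantMean

theorem exists_forall_map_mul_eq_mul {φ : H →* G} (hφ : Function.Injective φ) :
    ∃ r : G → H, ∀ h g, r (φ h * g) = h * r g := by
  obtain ⟨T, hT, -⟩ := φ.range.exists_isComplement_right 1
  refine ⟨fun g => (MonoidHom.ofInjective hφ).symm (hT.equiv g).1, fun h g => ?_⟩
  have hequiv := hT.equiv_mul_left (MonoidHom.ofInjective hφ h) g
  rw [MonoidHom.ofInjective_apply] at hequiv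
  simp only [hequiv, map_mul, MulEquiv.symm_apply_apply]

theorem IsAmenable.of_injective (hG : IsAmenable G) {φ : H →* G} (hφ : Function.Injective φ) :
    IsAmenable H := by
  obtain ⟨m, hm⟩ := isAmenable_iff_exists_isInvariantMean.mp hG
  obtain ⟨r, hr⟩ := exists_forall_map_mul_eq_mul hφ
  exact isAmenable_iff_exists_isInvariantMean.mpr ⟨_, hm.comp_preimage φ hr⟩

theorem not_isAmenable_freeGroup {α : Type*} [Nontrivial α] : ¬ IsAmenable (FreeGroup α) := by
  classical
  rw [isAmenable_iff_exists_isInvariantMean]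
  rintro ⟨m, hm⟩
  obtain ⟨i, j, hij⟩ := exists_pair_ne α
  let W := FreeGroup.startsWith (α := α)
  have hunion (i : α) : m (W (i, true) ∪ W (i, false)) = m (W (i, true)) + m (W (i, false)) :=
    hm.union _ _ (by simp [W])
  have hdisj : Disjoint (W (i, true) ∪ W (i, false)) (W (j, true) ∪ W (j, false)) := by
    simp [W, hij]
  have htotal := hm.mono (Set.subset_univ ((W (i, true) ∪ W (i, false)) ∪
    (W (j, true) ∪ W (j, false))))
  rw [hm.union _ _ hdisj, hunion, hunion, hm.univ] at htotal
  linarith [hm.one_le_startsWith_add i, hm.one_le_startsWith_add j]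

end Amenability

/-! ### Free groups inside groups generated by involutions -/

section Involutions

variable {ι : Type*}

/-- The word in the involutions `s p`, `p : ι × Bool`, that spells the word `L` of the free group
when `i : ι` stands for `s (i, true) * s (i, false)`. -/
def involutionWord (L : List (ι × Bool)) : List (ι × Bool) :=
  L.flatMap fun p => [p, (p.1, !p.2)]

theorem prod_map_involutionWord {G : Type*} [Group G] {s : ι × Bool → G}
    (hs : ∀ p, s p * s p = 1) (L : List (ι × Bool)) :
    ((involutionWord L).map s).prod =
      FreeGroup.lift (fun i => s (i, true) * s (i, false)) (FreeGroup.mk L) := by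
  have hinv p : (s p)⁻¹ = s p := inv_eq_of_mul_eq_one_left (hs p)
  rw [FreeGroup.lift_mk, involutionWord]
  induction L with
  | nil => rfl
  | cons p L ih =>
    obtain ⟨i, b⟩ := p
    cases b <;> simp [ih, hinv, mul_assoc]

theorem isChain_involutionWord {L : List (ι × Bool)} (hL : FreeGroup.IsReduced L) :
    (involutionWord L).IsChain (· ≠ ·) := by
  induction L with
  | nil => exact .nil
  | cons p L ih =>
    obtain ⟨hhead, htail⟩ := List.isChain_cons.mp hL
    refine .cons_cons (by simp [Prod.ext_iff]) (List.isChain_cons.mpr ⟨?_, ih htail⟩)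
    rintro _ hq rfl
    cases L with
    | nil => simp at hq
    | cons q L =>
      obtain rfl : q = (p.1, !p.2) := by simpa [involutionWord] using hq
      simpa using hhead _ rfl rfl

theorem injective_lift_mul_of_involutions {G : Type*} [Group G] {s : ι × Bool → G}
    (hs : ∀ p, s p * s p = 1)
    (hfree : ∀ l : List (ι × Bool), l ≠ [] → l.IsChain (· ≠ ·) → (l.map s).prod ≠ 1) :
    Function.Injective (FreeGroup.lift fun i => s (i, true) * s (i, false)) := by
  classical
  refine (injective_iff_map_eq_one _).mpr fun g hg => ?_
  rw [← g.mk_toWord, ← prod_map_involutionWord hs] at hg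
  by_contra hne
  have hnil : involutionWord g.toWord ≠ [] := by
    cases hw : g.toWord with
    | nil => exact absurd (FreeGroup.toWord_eq_nil_iff.mp hw) hne
    | cons p L => simp [involutionWord]
  exact hfree _ hnil (isChain_involutionWord FreeGroup.isReduced_toWord) hg

end Involutions

/-! ### Exchanging a set with a translate -/

section MarkSwap

variable {A S ι : Type*} [AddCommGroup A]

open Classical in
/-- The involution exchanging `v` and `v + w` for every `v ∈ E`, where `E` is disjoint from its
translate `E + w`. -/
noncomputable def translateSwap (E : Set A) (w : A) (hE : ∀ v ∈ E, v + w ∉ E) : Equiv.Perm A :=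
  Function.Involutive.toPerm (fun v => if v ∈ E then v + w else if v - w ∈ E then v - w else v)
    fun v => by
      by_cases hv : v ∈ E
      · simp [hv, hE v hv]
      · by_cases hvw : v - w ∈ E <;> simp [hv, hvw]

open Classical in
theorem translateSwap_apply {E : Set A} {w : A} (hE : ∀ v ∈ E, v + w ∉ E) (v : A) :
    translateSwap E w hE v = if v ∈ E then v + w else if v - w ∈ E then v - w else v :=
  rfl

theorem translateSwap_mul_self {E : Set A} {w : A} (hE : ∀ v ∈ E, v + w ∉ E) :
    translateSwap E w hE * translateSwap E w hE = 1 :=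
  Equiv.ext (Function.Involutive.toPerm_involutive _)

theorem translateSwap_apply_add {E : Set A} {w : A} (hE : ∀ v ∈ E, v + w ∉ E) {v : A}
    (hv : v ∈ E) : translateSwap E w hE (v + w) = v := by
  simp [translateSwap_apply, hE v hv, hv]

/-- The sites `v` whose cell at offset `a` begins a run of the symbol `s` along the direction `w`:
the cell `v + a` carries `s` but the preceding cell `v + a - w` does not. -/
def markedSites (s : S) (w a : A) (x : A → S) : Set A :=
  {v | x (v + a) = s ∧ x (v + a - w) ≠ s}

theorem add_notMem_markedSites {s : S} {w a : A} {x : A → S} :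
    ∀ v ∈ markedSites s w a x, v + w ∉ markedSites s w a x :=
  fun v hv hvw => hvw.2 (by rw [add_right_comm, add_sub_cancel_right]; exact hv.1)

/-- The tape-dependent involution exchanging `v` and `v + w` for every marked site `v`. As motions
of a head over the tape, these involutions generate the free groups. -/
noncomputable def markSwap (s : S) (w a : A) : (A → S) → Equiv.Perm A :=
  fun x => translateSwap (markedSites s w a x) w add_notMem_markedSites

theorem markSwap_mul_self (s : S) (w a : A) : markSwap s w a * markSwap s w a = 1 :=
  funext fun _ => translateSwap_mul_self _

theorem markSwap_apply_add {s : S} {w a v : A} {x : A → S} (hv : v ∈ markedSites s w a x) :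
    markSwap s w a x (v + w) = v :=
  translateSwap_apply_add _ hv

theorem mem_markedSites_comp_add_right {s : S} {w a : A} {x : A → S} {u v : A} :
    u ∈ markedSites s w a (fun t => x (t + v)) ↔ u + v ∈ markedSites s w a x := by
  simp only [markedSites, Set.mem_ofPred_eq, add_right_comm u a v, sub_add_eq_add_sub (u + a) w v]

theorem markSwap_comp_add_right (s : S) (w a : A) (x : A → S) (u v : A) :
    markSwap s w a (fun t => x (t + v)) u + v = markSwap s w a x (u + v) := by
  classical
  simp only [markSwap, translateSwap_apply, mem_markedSites_comp_add_right,
    sub_add_eq_add_sub u w v]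
  split_ifs
  · exact add_right_comm u w v
  · exact sub_add_eq_add_sub u w v
  · rfl

theorem dependsOn_mem_markedSites (s : S) (w a v : A) :
    DependsOn (fun x => v ∈ markedSites s w a x) {v + a, v + a - w} := fun x y hxy => by
  simp only [markedSites, Set.mem_ofPred_eq, hxy (v + a) (.inl rfl), hxy (v + a - w) (.inr rfl)]

theorem dependsOn_markSwap_apply (s : S) (w a v : A) :
    DependsOn (fun x => markSwap s w a x v)
      ({v + a, v + a - w} ∪ {v - w + a, v - w + a - w}) := fun x y hxy => by
  have hv : (v ∈ markedSites s w a x) = (v ∈ markedSites s w a y) :=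
    dependsOn_mem_markedSites s w a v fun u hu => hxy u (.inl hu)
  have hvw : (v - w ∈ markedSites s w a x) = (v - w ∈ markedSites s w a y) :=
    dependsOn_mem_markedSites s w a (v - w) fun u hu => hxy u (.inr hu)
  simp only [markSwap, translateSwap_apply]
  congr

open Classical in
/-- The tape that marks with `s` the cells `j • w + a c`, where `c` is the `j`-th letter of the
word `l`, and carries `t` elsewhere. It opens the path `0, w, 2 • w, …, l.length • w`, whose
`j`-th edge belongs to the involution of the letter `c`. -/
noncomputable def wordTape (s t : S) (w : A) (a : ι → A) (l : List ι) : A → S := fun v =>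
  if ∃ (j : ℕ) (c : ι), l[j]? = some c ∧ v = j • w + a c then s else t

theorem nsmul_mem_markedSites_wordTape {s t : S} (hst : s ≠ t) {w : A} {a : ι → A}
    (ha : Function.Injective fun p : ℕ × ι => p.1 • w + a p.2) {l : List ι}
    (hl : l.IsChain (· ≠ ·)) {j : ℕ} {c : ι} (hc : l[j]? = some c) :
    j • w ∈ markedSites s w (a c) (wordTape s t w a l) := by
  refine ⟨if_pos ⟨j, c, hc, rfl⟩, fun hmark => ?_⟩
  obtain ⟨i, b, hb, hcell⟩ := of_not_not fun h => hst (hmark.symm.trans (if_neg h))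
  obtain ⟨rfl, rfl⟩ : j = i + 1 ∧ c = b := Prod.ext_iff.mp <| @ha (j, c) (i + 1, b) <| by
    change j • w + a c = (i + 1) • w + a b
    rw [succ_nsmul, add_right_comm, ← hcell, sub_add_cancel]
  obtain ⟨hi, hb⟩ := List.getElem?_eq_some_iff.mp hb
  obtain ⟨hi', hc⟩ := List.getElem?_eq_some_iff.mp hc
  exact List.isChain_iff_getElem.mp hl i hi' (hb.trans hc.symm)

theorem prod_map_apply_path {X : Type*} (σ : ι → Equiv.Perm X) (l : List ι) (p : ℕ → X)
    (hp : ∀ j c, l[j]? = some c → σ c (p (j + 1)) = p j) : (l.map σ).prod (p l.length) = p 0 := by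
  induction l generalizing p with
  | nil => rfl
  | cons c l ih =>
    rw [List.map_cons, List.prod_cons, Equiv.Perm.mul_apply, List.length_cons,
      ih (fun j => p (j + 1)) fun j => hp (j + 1), hp 0 c rfl]

theorem prod_map_markSwap_ne_one [Nontrivial S] (s : S) {w : A} {a : ι → A}
    (ha : Function.Injective fun p : ℕ × ι => p.1 • w + a p.2) {l : List ι}
    (hne : l ≠ []) (hl : l.IsChain (· ≠ ·)) :
    (l.map fun c => markSwap s w (a c)).prod ≠ 1 := fun h => by
  obtain ⟨t, hts⟩ := exists_ne s
  let x := wordTape s t w a l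
  have hpath : (l.map fun c => markSwap s w (a c) x).prod (l.length • w) = (0 : ℕ) • w :=
    prod_map_apply_path _ l (· • w) fun j c hc => by
      rw [succ_nsmul]
      exact markSwap_apply_add (nsmul_mem_markedSites_wordTape hts.symm ha hl hc)
  have hx : (l.map fun c => markSwap s w (a c) x).prod = 1 := by
    simpa [map_list_prod, Function.comp_def] using congrArg (Pi.evalMonoidHom _ x) h
  rw [hx, Equiv.Perm.one_apply] at hpath
  have hlen : (l.length, l.head hne) = (0, l.head hne) :=
    ha (congrArg (· + a (l.head hne)) hpath)
  exact hne (List.length_eq_zero_iff.mp (Prod.ext_iff.mp hlen).1)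

theorem exists_injective_nsmul_add [Finite ι] {e : A} (he : ¬ IsOfFinAddOrder e) :
    ∃ (w : A) (a : ι → A), Function.Injective fun p : ℕ × ι => p.1 • w + a p.2 := by
  obtain ⟨m, ⟨f⟩⟩ := Finite.exists_equiv_fin ι
  refine ⟨m • e, fun c => (f c : ℕ) • e, fun ⟨i, b⟩ ⟨j, c⟩ h => ?_⟩
  have : NeZero m := ⟨(f b).pos.ne'⟩
  simp only [← mul_nsmul', ← add_nsmul] at h
  have hdiv := (Nat.divModEquiv m).symm.injective (a₁ := (i, f b)) (a₂ := (j, f c))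
    (injective_nsmul_iff_not_isOfFinAddOrder.mpr he h)
  simpa using hdiv

end MarkSwap

/-! ### Machines that only move the head -/

section MoveHead

variable {d n k : ℕ}

/-- The permutation of `X_{n,k}` that moves the head by a tape-dependent permutation of `ℤ^d`,
keeping the tape and the state. -/
def moveHead (d n k : ℕ) : ((V d → Fin n) → Equiv.Perm (V d)) →* Equiv.Perm (X d n k) where
  toFun g :=
    { toFun c := ⟨(c.val.1, c.val.2 ∘ (g c.val.1).symm), fun u v hu hv =>
        (g c.val.1).symm.injective (c.property _ _ hu hv)⟩
      invFun c := ⟨(c.val.1, c.val.2 ∘ g c.val.1), fun u v hu hv =>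
        (g c.val.1).injective (c.property _ _ hu hv)⟩
      left_inv c := by ext1; simp [Function.comp_assoc]
      right_inv c := by ext1; simp [Function.comp_assoc] }
  map_one' := rfl
  map_mul' _ _ := rfl

theorem coe_moveHead_apply (g : (V d → Fin n) → Equiv.Perm (V d)) (c : X d n k) :
    (moveHead d n k g c).val = (c.val.1, c.val.2 ∘ (g c.val.1).symm) :=
  rfl

theorem moveHead_injective [NeZero k] : Function.Injective (moveHead d n k) := by
  intro g h hgh
  funext x
  ext1 v
  let c : X d n k := ⟨(x, fun u => if u = v then some 0 else none), fun u u' hu hu' => by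
    simp_all⟩
  have hhead := congrArg (fun c : X d n k => c.val.2 (g x v)) (Equiv.congr_fun hgh c)
  have hv : (h x).symm (g x v) = v := by simpa [coe_moveHead_apply, c] using hhead
  exact (Equiv.symm_apply_eq _).mp hv

/-- A tape-dependent motion of the head that commutes with the shift and reads only finitely many
cells around the head: such a motion is carried out by a Turing machine. -/
structure IsLocalMotion (g : (V d → Fin n) → V d → V d) : Prop where
  shift (x : V d → Fin n) (u v : V d) : g (fun t => x (t + v)) u + v = g x (u + v)
  exists_dependsOn : ∃ F : Finset (V d), DependsOn (fun x => g x 0) F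

theorem IsLocalMotion.isTM_moveHead {g : (V d → Fin n) → Equiv.Perm (V d)}
    (hg : IsLocalMotion fun x => g x) : IsTM (moveHead d n k g) := by
  obtain ⟨F, hF⟩ := hg.exists_dependsOn
  refine ⟨F, ∅, fun x q => (x, q, g x 0), fun x x' q hx => ⟨by simp, ?_⟩, fun c hc => ?_,
    fun c v q hv => ⟨fun t => by simp [coe_moveHead_apply], fun t => ?_⟩⟩
  · exact congrArg (q, ·) (hF hx)
  · ext1
    refine Prod.ext rfl (funext fun u => ?_)
    exact (hc _).trans (hc u).symm
  · have hmove : v + g (fun u => c.val.1 (u + v)) 0 = g c.val.1 v := by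
      rw [add_comm, hg.shift, zero_add]
    change c.val.2 ((g c.val.1).symm t) = _
    rw [hmove]
    split_ifs with ht
    · rw [ht, Equiv.symm_apply_apply, hv]
    · refine Option.eq_none_iff_forall_ne_some.mpr fun q' hq' => ht ?_
      have htv : (g c.val.1).symm t = v := c.property _ v (by simp [hq']) (by simp [hv])
      rw [← htv, Equiv.apply_symm_apply]

theorem IsLocalMotion.moveHead_mem_RFAgrp {g : (V d → Fin n) → Equiv.Perm (V d)}
    (hg : IsLocalMotion fun x => g x) (hg' : IsLocalMotion fun x => (g⁻¹) x) :
    moveHead d n k g ∈ RFAgrp d n k :=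
  Subgroup.subset_closure ⟨⟨hg.isTM_moveHead, hg'.isTM_moveHead⟩, fun _ => rfl⟩

theorem isLocalMotion_markSwap (s : Fin n) (w a : V d) :
    IsLocalMotion fun x => markSwap s w a x where
  shift := markSwap_comp_add_right s w a
  exists_dependsOn := ⟨{0 + a, 0 + a - w} ∪ {0 - w + a, 0 - w + a - w}, by
    push_cast
    exact dependsOn_markSwap_apply s w a 0⟩

theorem moveHead_markSwap_mem_RFAgrp (s : Fin n) (w a : V d) :
    moveHead d n k (markSwap s w a) ∈ RFAgrp d n k := by
  have hinv : (markSwap s w a)⁻¹ = markSwap s w a :=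
    inv_eq_of_mul_eq_one_left (markSwap_mul_self s w a)
  have hlocal := isLocalMotion_markSwap s w a
  exact hlocal.moveHead_mem_RFAgrp (hinv ▸ hlocal)

theorem RFAgrp_le_RTMgrp : RFAgrp d n k ≤ RTMgrp d n k :=
  Subgroup.closure_mono fun _ h => h.1

theorem exists_injective_freeGroup_RFAgrp (ι : Type*) [Finite ι] [NeZero d] [Nontrivial (Fin n)]
    [NeZero k] : ∃ φ : FreeGroup ι →* RFAgrp d n k, Function.Injective φ := by
  let s : Fin n := Classical.arbitrary (Fin n)
  obtain ⟨e, he⟩ := exists_ne (0 : V d)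
  obtain ⟨w, a, ha⟩ := exists_injective_nsmul_add (ι := ι × Bool)
    (not_isOfFinAddOrder_of_isAddTorsionFree he)
  let γ (p : ι × Bool) : (V d → Fin n) → Equiv.Perm (V d) := markSwap s w (a p)
  let ψ := FreeGroup.lift fun i => γ (i, true) * γ (i, false)
  have hψ : Function.Injective ψ :=
    injective_lift_mul_of_involutions (fun p => markSwap_mul_self s w (a p))
      fun _ => prod_map_markSwap_ne_one s ha
  have hrange : ψ.range ≤ (RFAgrp d n k).comap (moveHead d n k) := by
    refine FreeGroup.range_lift_le ?_
    rintro _ ⟨i, rfl⟩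
    exact mul_mem (moveHead_markSwap_mem_RFAgrp _ _ _) (moveHead_markSwap_mem_RFAgrp _ _ _)
  refine ⟨((moveHead d n k).comp ψ).codRestrict (RFAgrp d n k) fun g => hrange ⟨g, rfl⟩, ?_⟩
  exact MonoidHom.injective_codRestrict .. |>.mpr (moveHead_injective.comp hψ)

end MoveHead

theorem freeGroup_embeds_and_not_amenable_general (d n k : ℕ) (ι : Type*) [Finite ι]
    (hd : 1 ≤ d) (hn : 2 ≤ n) (hk : 1 ≤ k) :
    (∃ φ : FreeGroup ι →* RFAgrp d n k, Function.Injective φ) ∧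
    (∃ φ : FreeGroup ι →* RTMgrp d n k, Function.Injective φ) ∧
    ¬ IsAmenable (RFAgrp d n k) ∧ ¬ IsAmenable (RTMgrp d n k) := by
  have : NeZero d := ⟨by lia⟩
  have : NeZero k := ⟨by lia⟩
  have : Nontrivial (Fin n) := Fin.nontrivial_iff_two_le.mpr hn
  have hincl := Subgroup.inclusion_injective (RFAgrp_le_RTMgrp (d := d) (n := n) (k := k))
  obtain ⟨φ, hφ⟩ := exists_injective_freeGroup_RFAgrp (d := d) (n := n) (k := k) ι
  obtain ⟨φ₂, hφ₂⟩ := exists_injective_freeGroup_RFAgrp (d := d) (n := n) (k := k) (Fin 2)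
  have hRFA : ¬ IsAmenable (RFAgrp d n k) := fun h => not_isAmenable_freeGroup (h.of_injective hφ₂)
  exact ⟨⟨φ, hφ⟩, ⟨(Subgroup.inclusion RFAgrp_le_RTMgrp).comp φ, hincl.comp hφ⟩, hRFA,
    fun h => hRFA (h.of_injective hincl)⟩

/-- For `n ≥ 2`, the free group on two generators embeds into `RFA(ℤ^d,n,k)`, hence
into `RTM(ℤ^d,n,k)`; in particular neither group is amenable. -/
theorem freeGroup_embeds_and_not_amenable (d n k : ℕ)
    (hd : 1 ≤ d) (hn : 2 ≤ n) (hk : 1 ≤ k) :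
    (∃ φ : FreeGroup (Fin 2) →* RFAgrp d n k, Function.Injective ⇑φ) ∧
    (∃ φ : FreeGroup (Fin 2) →* RTMgrp d n k, Function.Injective ⇑φ) ∧
    ¬ IsAmenable (RFAgrp d n k) ∧ ¬ IsAmenable (RTMgrp d n k) := by
  exact freeGroup_embeds_and_not_amenable_general d n k (Fin 2) hd hn hk
end
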